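/- Let A = (L_1,L_2,L_3,L_4) and A' = (L'_1,L'_2,L'_3,L'_4) encode (4,1) valise adinkras with chiralities χ and χ' respectively. If χ ≠ χ', then Σ_{I≠J} trace(L_Iᵀ·L_J·L'_Iᵀ·L'_J) = 0 (the sum over all ordered pairs of distinct I,J ∈ {1,2,3,4}); that is, the gadget OG(A,A') vanishes whenever A and A' have different chirality. -/

import Mathlib

/-!
For L-matrices `L_I` the bilinears `B_IJ = L_Iᵀ L_J` satisfy `B_IJ B_JK = B_IK` and are
antisymmetric off the diagonal. The chirality condition `B_01 B_23 = -χ` then says that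
complementary bilinears agree up to sign: `B_23 = χ B_01`, `B_13 = -χ B_02`, `B_12 = χ B_03`.
So in `∑ B_IJ B'_IJ` every pair of indices contributes `χ χ'` times what the complementary pair
does, and the sum carries a factor `1 + χ χ'`, which is zero for opposite chiralities. The
cancellation takes place before the trace is taken.
-/

open Matrix

/-- A signed permutation matrix: exactly one nonzero entry in each row and column,
that entry being `1` or `-1`. -/
def IsSignedPerm {n : ℕ} (M : Matrix (Fin n) (Fin n) ℤ) : Prop :=
  (∀ i j, M i j = 0 ∨ M i j = 1 ∨ M i j = -1) ∧
  (∀ i, ∃! j, M i j ≠ 0) ∧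
  (∀ j, ∃! i, M i j ≠ 0)

/-- The garden algebra relations for a family of `d × d` integer matrices. -/
def GardenRel {d N : ℕ} (L : Fin N → Matrix (Fin d) (Fin d) ℤ) : Prop :=
  ∀ I J : Fin N,
    (L I * (L J)ᵀ + L J * (L I)ᵀ =
      if I = J then (2 : ℤ) • (1 : Matrix (Fin d) (Fin d) ℤ) else 0) ∧
    ((L I)ᵀ * L J + (L J)ᵀ * L I =
      if I = J then (2 : ℤ) • (1 : Matrix (Fin d) (Fin d) ℤ) else 0)

/-- The L-matrices of a (4,1) valise adinkra: a quadruple of 4×4 integer signed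
permutation matrices satisfying the garden algebra relations. -/
def IsAdinkra (L : Fin 4 → Matrix (Fin 4) (Fin 4) ℤ) : Prop :=
  (∀ I, IsSignedPerm (L I)) ∧ GardenRel L

/-- `Σ_{I≠J} trace(L_Iᵀ·L_J·L'_Iᵀ·L'_J)`, summed over ordered pairs of distinct
`I, J ∈ {1,2,3,4}`; the gadget is `OG(A,A') = -(1/48)` times this quantity. -/
def gadgetSum (L L' : Fin 4 → Matrix (Fin 4) (Fin 4) ℤ) : ℤ :=
  ∑ I : Fin 4, ∑ J : Fin 4,
    if I ≠ J then Matrix.trace ((L I)ᵀ * L J * (L' I)ᵀ * L' J) else 0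

/-- The relations satisfied by the bilinears `B I J = L_Iᵀ * L_J` of a garden algebra, for a family
of elements of an arbitrary ring: a multiplicative cocycle that is antisymmetric off the diagonal.
It stands in for the garden algebra because the gadget depends on the `L_I` through `B` only. -/
structure IsSkewCocycle {ι A : Type*} [Ring A] (B : ι → ι → A) : Prop where
  apply_self : ∀ i, B i i = 1
  apply_mul_apply : ∀ i j k, B i j * B j k = B i k
  swap_apply : ∀ {i j}, i ≠ j → B j i = -B i j

/-- The family `B I J = L_Iᵀ * L_J` of bilinears has chirality `χ`. Indices start at `0`, so
that `B 0 1 * B 2 3` is the product `L_1ᵀ L_2 L_3ᵀ L_4` of the paper. -/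
def HasChirality {R A : Type*} [CommRing R] [Ring A] [Algebra R A]
    (B : Fin 4 → Fin 4 → A) (χ : R) : Prop :=
  B 0 1 * B 2 3 = -(χ • (1 : A))

namespace IsSkewCocycle

section Ring

variable {ι A : Type*} [Ring A] {B B' : ι → ι → A}

theorem mul_self_eq_neg_one (hB : IsSkewCocycle B) {i j : ι} (hij : i ≠ j) :
    B i j * B i j = -1 := by
  rw [← neg_eq_iff_eq_neg, ← mul_neg, ← hB.swap_apply hij, hB.apply_mul_apply, hB.apply_self]

theorem mul_swap_middle (hB : IsSkewCocycle B) (i l : ι) {j k : ι} (hjk : j ≠ k) :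
    B i k * B j l = -(B i j * B k l) :=
  calc B i k * B j l = B i j * (B j k * B j k) * B k l := by
        simp only [← hB.apply_mul_apply i j k, ← hB.apply_mul_apply j k l, mul_assoc]
    _ = -(B i j * B k l) := by
        rw [hB.mul_self_eq_neg_one hjk, mul_neg_one, neg_mul]

theorem swap_mul_swap (hB : IsSkewCocycle B) (hB' : IsSkewCocycle B') (i j : ι) :
    B j i * B' j i = B i j * B' i j := by
  obtain rfl | hij := eq_or_ne i j
  · rfl
  · rw [hB.swap_apply hij, hB'.swap_apply hij, neg_mul_neg]

theorem eq_smul_of_mul_eq_neg_smul_one {R : Type*} [CommRing R] [Algebra R A]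
    (hB : IsSkewCocycle B) {i j : ι} (hij : i ≠ j) {x : A} {c : R}
    (hx : B i j * x = -(c • (1 : A))) : x = c • B i j :=
  calc x = B j i * (B i j * x) := by
        rw [← mul_assoc, hB.apply_mul_apply, hB.apply_self, one_mul]
    _ = c • B i j := by
        rw [hx, hB.swap_apply hij, neg_mul_neg, mul_smul_comm, mul_one]

end Ring

section Chirality

variable {R A : Type*} [CommRing R] [Ring A] [Algebra R A] {B B' : Fin 4 → Fin 4 → A} {χ χ' : R}

theorem apply_two_three (hB : IsSkewCocycle B) (hχ : HasChirality B χ) :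
    B 2 3 = χ • B 0 1 :=
  hB.eq_smul_of_mul_eq_neg_smul_one (by decide) hχ

theorem apply_one_three (hB : IsSkewCocycle B) (hχ : HasChirality B χ) :
    B 1 3 = -χ • B 0 2 := by
  have h : B 0 2 * B 1 3 = -(-χ • (1 : A)) := by
    rw [hB.mul_swap_middle 0 3 (by decide), hχ, neg_smul]
  exact hB.eq_smul_of_mul_eq_neg_smul_one (by decide) h

theorem apply_one_two (hB : IsSkewCocycle B) (hχ : HasChirality B χ) :
    B 1 2 = χ • B 0 3 := by
  have h : B 0 3 * B 1 2 = -(χ • (1 : A)) := by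
    rw [hB.mul_swap_middle 0 2 (by decide), hB.swap_apply (by decide : (2 : Fin 4) ≠ 3), mul_neg,
      neg_neg, hχ]
  exact hB.eq_smul_of_mul_eq_neg_smul_one (by decide) h

theorem sum_mul_eq_smul (hB : IsSkewCocycle B) (hB' : IsSkewCocycle B')
    (hχ : HasChirality B χ) (hχ' : HasChirality B' χ') :
    ∑ I, ∑ J, (if I ≠ J then B I J * B' I J else 0) =
      (2 * (1 + χ * χ')) • (B 0 1 * B' 0 1 + B 0 2 * B' 0 2 + B 0 3 * B' 0 3) := by
  have h23 : B 2 3 * B' 2 3 = (χ * χ') • (B 0 1 * B' 0 1) := by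
    rw [hB.apply_two_three hχ, hB'.apply_two_three hχ', smul_mul_smul_comm]
  have h13 : B 1 3 * B' 1 3 = (χ * χ') • (B 0 2 * B' 0 2) := by
    rw [hB.apply_one_three hχ, hB'.apply_one_three hχ', smul_mul_smul_comm, neg_mul_neg]
  have h12 : B 1 2 * B' 1 2 = (χ * χ') • (B 0 3 * B' 0 3) := by
    rw [hB.apply_one_two hχ, hB'.apply_one_two hχ', smul_mul_smul_comm]
  simp only [Fin.sum_univ_four, ne_eq, Fin.reduceEq, not_true_eq_false, not_false_eq_true,
    if_true, if_false]
  rw [hB.swap_mul_swap hB' 0 1, hB.swap_mul_swap hB' 0 2, hB.swap_mul_swap hB' 0 3,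
    hB.swap_mul_swap hB' 1 2, hB.swap_mul_swap hB' 1 3, hB.swap_mul_swap hB' 2 3, h23, h13, h12]
  module

end Chirality

end IsSkewCocycle

namespace GardenRel

variable {d N : ℕ} {L : Fin N → Matrix (Fin d) (Fin d) ℤ}

theorem mul_transpose_self (h : GardenRel L) (I : Fin N) : L I * (L I)ᵀ = 1 := by
  have hII := (h I I).1
  rw [if_pos rfl, ← two_smul ℤ] at hII
  exact smul_right_injective _ two_ne_zero hII

theorem transpose_mul_self (h : GardenRel L) (I : Fin N) : (L I)ᵀ * L I = 1 :=
  mul_eq_one_comm.mp (h.mul_transpose_self I)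

theorem isSkewCocycle (h : GardenRel L) : IsSkewCocycle fun I J ↦ (L I)ᵀ * L J where
  apply_self := h.transpose_mul_self
  apply_mul_apply I J K := by
    rw [Matrix.mul_assoc, ← Matrix.mul_assoc (L J), h.mul_transpose_self, Matrix.one_mul]
  swap_apply {I J} hIJ := by
    have hJI := (h J I).2
    rw [if_neg hIJ.symm] at hJI
    exact eq_neg_of_add_eq_zero_left hJI

end GardenRel

theorem gadgetSum_eq_trace_sum (L L' : Fin 4 → Matrix (Fin 4) (Fin 4) ℤ) :
    gadgetSum L L' = trace (∑ I, ∑ J,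
      if I ≠ J then (L I)ᵀ * L J * ((L' I)ᵀ * L' J) else 0) := by
  simp only [gadgetSum, trace_sum, apply_ite trace, trace_zero, Matrix.mul_assoc]

theorem stmt13_general {R A : Type*} [CommRing R] [Ring A] [Algebra R A]
    {B B' : Fin 4 → Fin 4 → A} (hB : IsSkewCocycle B) (hB' : IsSkewCocycle B') {χ χ' : R}
    (hχ : HasChirality B χ) (hχ' : HasChirality B' χ') (hχχ' : χ * χ' = -1) :
    ∑ I, ∑ J, (if I ≠ J then B I J * B' I J else 0) = 0 := by
  rw [hB.sum_mul_eq_smul hB' hχ hχ', hχχ', add_neg_cancel, mul_zero, zero_smul]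

theorem stmt13 (L L' : Fin 4 → Matrix (Fin 4) (Fin 4) ℤ)
    (hL : IsAdinkra L) (hL' : IsAdinkra L')
    (χ χ' : ℤ) (hχ : χ = 1 ∨ χ = -1) (hχ' : χ' = 1 ∨ χ' = -1)
    (hchir : (L 0)ᵀ * L 1 * (L 2)ᵀ * L 3 = -(χ • (1 : Matrix (Fin 4) (Fin 4) ℤ)))
    (hchir' : (L' 0)ᵀ * L' 1 * (L' 2)ᵀ * L' 3 = -(χ' • (1 : Matrix (Fin 4) (Fin 4) ℤ)))
    (hne : χ ≠ χ') :
    gadgetSum L L' = 0 := by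
  have hχχ' : χ * χ' = -1 := by grind
  rw [Matrix.mul_assoc] at hchir hchir'
  rw [gadgetSum_eq_trace_sum,
    stmt13_general hL.2.isSkewCocycle hL'.2.isSkewCocycle hchir hchir' hχχ', trace_zero]
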